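/- Kummer's second transformation: let c ∈ ℂ be such that neither c nor 2c − 1 is a nonpositive integer, and let z ∈ ℂ ∖ ]−∞,0] with √z the principal square root. Then ₀F₁(c; z) = e^{−2√z} · ₁F₁(c − 1/2; 2c − 1; 4√z), where ₀F₁(c; z) := Γ(c)·₀𝐅₁(c; z) and ₁F₁(a; c; z) := Γ(c)·₁𝐅₁(a; c; z). -/

import Mathlib

/-!
As formal power series in `X`, the confluent series `F = ₁F₁(a; 2a; X)` satisfies
`X F'' + (2a - X) F' = a F`. Multiplying by `e^{-X/2}` removes the first-order term `X F'`, and the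
product `G` satisfies `X G'' + 2a G' = X G / 4`. This equation couples only coefficients of the same
parity and forces the coefficient of `X` to vanish, so `G` is even; comparing recurrences gives
`G = ₀F₁(a + 1/2; X² / 16)`. Kummer's transformation is the value of this identity at `X = 4w`,
where `w` is any square root of `z`.
-/

open Complex

/-- Olver-normalized hypergeometric function `₀𝐅₁(c; w) = ∑ wⁿ/(n! Γ(c+n))`. -/
noncomputable def zeroF1reg (c w : ℂ) : ℂ :=
  ∑' n : ℕ, w ^ n / ((n.factorial : ℂ) * Complex.Gamma (c + n))

/-- Olver-normalized confluent hypergeometric function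
`₁𝐅₁(a; c; w) = ∑ (a)ₙ wⁿ/(n! Γ(c+n))`. -/
noncomputable def oneF1reg (a c w : ℂ) : ℂ :=
  ∑' n : ℕ, (ascPochhammer ℂ n).eval a * w ^ n / ((n.factorial : ℂ) * Complex.Gamma (c + n))

section FormalSeries

open PowerSeries

/-- `F` is a formal solution of Kummer's confluent hypergeometric equation
`X F'' + (b - X) F' = a F`, with the term `X F'` moved to the right-hand side. -/
def IsKummerSolution {R : Type*} [CommRing R] (a b : R) (F : R⟦X⟧) : Prop :=
  X * d⁄dX R (d⁄dX R F) + C b * d⁄dX R F = X * d⁄dX R F + C a * F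

/-- `G` is a formal solution of `X G'' + b G' = κ X G`, the equation satisfied by
`X ^ (-ν) I_ν(X)` (with `I_ν` the modified Bessel function) for `b = 2ν + 1` and `κ = 1`. -/
def IsBesselSolution {R : Type*} [CommRing R] (b κ : R) (G : R⟦X⟧) : Prop :=
  X * d⁄dX R (d⁄dX R G) + C b * d⁄dX R G = C κ * (X * G)

lemma derivative_rescale_exp {R : Type*} [CommRing R] [Algebra ℚ R] (μ : R) :
    d⁄dX R (rescale μ (PowerSeries.exp R)) = C μ * rescale μ (PowerSeries.exp R) := by
  ext n
  have h := congrArg (coeff n) (derivative_exp R)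
  rw [coeff_derivative] at h
  rw [coeff_derivative, coeff_C_mul, coeff_rescale, coeff_rescale]
  linear_combination μ ^ (n + 1) * h

variable {K : Type*} [Field K]

/-- The formal generalized hypergeometric series with numerator parameters `a` and denominator
parameters `b`, in the classical normalization (constant coefficient `1`). Its coefficients are junk
if some denominator parameter is a nonpositive integer. -/
noncomputable def formalHypergeometric (a b : Multiset K) : K⟦X⟧ :=
  mk fun n ↦ (a.map (ascPochhammer K n).eval).prod /
    (n.factorial * (b.map (ascPochhammer K n).eval).prod)

@[simp]
lemma constantCoeff_formalHypergeometric (a b : Multiset K) :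
    constantCoeff (formalHypergeometric a b) = 1 := by
  simp [← coeff_zero_eq_constantCoeff_apply, formalHypergeometric]

variable [CharZero K]

lemma coeff_succ_formalHypergeometric (a : Multiset K) {b : Multiset K} {n : ℕ}
    (hb : ∀ j ∈ b, j ≠ -n) :
    (n + 1) * (b.map (· + (n : K))).prod * coeff (n + 1) (formalHypergeometric a b) =
      (a.map (· + (n : K))).prod * coeff n (formalHypergeometric a b) := by
  have hb_prod : (b.map (· + (n : K))).prod ≠ 0 := by
    simpa [Multiset.prod_eq_zero_iff, add_eq_zero_iff_eq_neg] using fun h ↦ hb _ h rfl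
  have hn : (n + 1 : K) ≠ 0 := n.cast_add_one_ne_zero
  simp only [formalHypergeometric, coeff_mk, ascPochhammer_succ_eval, Multiset.prod_map_mul,
    Nat.factorial_succ, Nat.cast_mul, Nat.cast_add_one]
  field_simp

lemma isKummerSolution_formalHypergeometric (a : K) {b : K} (hb : ∀ n : ℕ, b ≠ -n) :
    IsKummerSolution a b (formalHypergeometric {a} {b}) := by
  rw [IsKummerSolution]
  ext n
  have h_rec := coeff_succ_formalHypergeometric {a} (b := {b}) (n := n) (by simpa using hb n)
  simp only [Multiset.map_singleton, Multiset.prod_singleton] at h_rec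
  cases n <;>
    simp only [map_add, coeff_C_mul, coeff_zero_X_mul, coeff_succ_X_mul, coeff_derivative] <;>
    push_cast at h_rec ⊢ <;>
    linear_combination h_rec

lemma IsKummerSolution.isBesselSolution_rescale_exp_mul {a : K} {F : K⟦X⟧}
    (hF : IsKummerSolution a (2 * a) F) :
    IsBesselSolution (2 * a) (1 / 4) (rescale (-1 / 2) (PowerSeries.exp K) * F) := by
  set E := rescale (-1 / 2 : K) (PowerSeries.exp K)
  have hC_half : (C (-1 / 2 : K) : K⟦X⟧) * 2 = -1 := by
    rw [← map_ofNat (C (R := K)) 2, ← map_mul]; norm_num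
  have hC_quarter : (C (1 / 4 : K) : K⟦X⟧) = C (-1 / 2) ^ 2 := by
    rw [← map_pow]; norm_num
  have hE' : d⁄dX K E = C (-1 / 2) * E := derivative_rescale_exp _
  have hG' : d⁄dX K (E * F) = E * (d⁄dX K F + C (-1 / 2) * F) := by
    rw [Derivation.leibniz, hE', smul_eq_mul, smul_eq_mul]; ring
  have hG'' : d⁄dX K (E * (d⁄dX K F + C (-1 / 2) * F)) =
      E * (d⁄dX K (d⁄dX K F) + 2 * C (-1 / 2) * d⁄dX K F + C (-1 / 2) ^ 2 * F) := by
    rw [Derivation.leibniz, hE', map_add, Derivation.leibniz, derivative_C]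
    simp only [smul_eq_mul]; ring
  rw [IsBesselSolution, hG', hG'', hC_quarter]
  rw [IsKummerSolution] at hF
  rw [map_mul, map_ofNat] at hF ⊢
  linear_combination E * hF + E * (X * d⁄dX K F + C a * F) * hC_half

namespace IsBesselSolution

lemma coeff_add_two {R : Type*} [CommRing R] {b κ : R} {G : R⟦X⟧} (hG : IsBesselSolution b κ G)
    (n : ℕ) : (n + 2) * (b + (n + 1 : ℕ)) * coeff (n + 2) G = κ * coeff n G := by
  have h := congrArg (coeff (n + 1)) hG
  simp only [map_add, coeff_C_mul, coeff_succ_X_mul, coeff_derivative] at h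
  push_cast at h ⊢
  linear_combination h

variable {b κ : K} {G : K⟦X⟧}

lemma coeff_odd (hG : IsBesselSolution b κ G) (hb : ∀ n : ℕ, b ≠ -n) (m : ℕ) :
    coeff (2 * m + 1) G = 0 := by
  induction m with
  | zero =>
    have h := congrArg (coeff 0) hG
    simp only [map_add, coeff_C_mul, coeff_zero_X_mul, coeff_derivative] at h
    simpa [show b ≠ 0 by simpa using hb 0] using h
  | succ m ih =>
    have h := hG.coeff_add_two (2 * m + 1)
    rw [ih, mul_zero] at h
    have h_left : ((2 * m + 1 : ℕ) + 2 : K) ≠ 0 := by norm_cast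
    have h_right : b + (2 * m + 1 + 1 : ℕ) ≠ 0 := mt eq_neg_of_add_eq_zero_left (hb _)
    exact (mul_eq_zero.mp h).resolve_left (mul_ne_zero h_left h_right)

lemma coeff_even (hG : IsBesselSolution b κ G) (hb : ∀ n : ℕ, b ≠ -n) (m : ℕ) :
    coeff (2 * m) G =
      constantCoeff G * ((κ / 4) ^ m * coeff m (formalHypergeometric 0 {(b + 1) / 2})) := by
  induction m with
  | zero => simp
  | succ m ih =>
    have h_ne : b + (2 * m + 1 : ℕ) ≠ 0 := mt eq_neg_of_add_eq_zero_left (hb _)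
    have hm : (m + 1 : K) ≠ 0 := m.cast_add_one_ne_zero
    have h_param : (b + 1) / 2 ≠ -m := by
      contrapose h_ne; push_cast; linear_combination 2 * h_ne
    have h_rec := coeff_succ_formalHypergeometric (0 : Multiset K) (b := {(b + 1) / 2}) (n := m)
      (by simpa using h_param)
    have h_ode := hG.coeff_add_two (2 * m)
    simp only [Multiset.map_zero, Multiset.map_singleton, Multiset.prod_zero,
      Multiset.prod_singleton, one_mul] at h_rec
    rw [ih, ← h_rec] at h_ode
    refine mul_left_cancel₀ (mul_ne_zero (mul_ne_zero two_ne_zero hm) h_ne) ?_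
    push_cast at h_ode ⊢
    linear_combination h_ode

theorem eq_expand_formalHypergeometric (hG : IsBesselSolution b κ G) (hb : ∀ n : ℕ, b ≠ -n) :
    G = C (constantCoeff G) *
      expand 2 two_ne_zero (rescale (κ / 4) (formalHypergeometric 0 {(b + 1) / 2})) := by
  ext n
  rw [coeff_C_mul]
  obtain ⟨m, rfl | rfl⟩ := n.even_or_odd'
  · rw [hG.coeff_even hb, coeff_expand_mul, coeff_rescale]
  · rw [hG.coeff_odd hb, coeff_expand_of_not_dvd _ _ _ (by lia), mul_zero]

end IsBesselSolution

theorem rescale_exp_mul_formalHypergeometric {a : K} (ha : ∀ n : ℕ, 2 * a ≠ -n) :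
    rescale (-1 / 2) (PowerSeries.exp K) * formalHypergeometric {a} {2 * a} =
      expand 2 two_ne_zero (rescale (1 / 16) (formalHypergeometric 0 {a + 1 / 2})) := by
  have h := (isKummerSolution_formalHypergeometric a ha).isBesselSolution_rescale_exp_mul
    |>.eq_expand_formalHypergeometric ha
  have h_const : constantCoeff
      (rescale (-1 / 2) (PowerSeries.exp K) * formalHypergeometric {a} {2 * a}) = 1 := by
    simp [← coeff_zero_eq_constantCoeff_apply (rescale _ _)]
  rw [h_const, map_one, one_mul] at h
  convert h using 4
  · norm_num
  · congr 1; ring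

end FormalSeries

section Evaluation

open PowerSeries

/-- The sum at `x` of the power series `f`, with the junk value of `tsum` where it diverges. -/
noncomputable def powerSeriesSum {R : Type*} [Semiring R] [TopologicalSpace R] (f : R⟦X⟧) (x : R) :
    R :=
  ∑' n, coeff n f * x ^ n

lemma powerSeriesSum_rescale {R : Type*} [CommSemiring R] [TopologicalSpace R] (r : R) (f : R⟦X⟧)
    (x : R) : powerSeriesSum (rescale r f) x = powerSeriesSum f (r * x) := by
  refine tsum_congr fun n ↦ ?_
  rw [coeff_rescale, mul_pow]
  ring

lemma powerSeriesSum_expand {R : Type*} [CommRing R] [TopologicalSpace R] {p : ℕ} (hp : p ≠ 0)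
    (f : R⟦X⟧) (x : R) : powerSeriesSum (expand p hp f) x = powerSeriesSum f (x ^ p) := by
  have h_inj : Function.Injective (p * ·) := mul_right_injective₀ hp
  rw [powerSeriesSum, ← h_inj.tsum_eq]
  · simp only [coeff_expand_mul, pow_mul, powerSeriesSum]
  · intro n hn
    by_contra h_range
    have h_dvd : ¬p ∣ n := fun ⟨m, hm⟩ ↦ h_range ⟨m, hm.symm⟩
    simp [coeff_expand_of_not_dvd p hp f h_dvd] at hn

lemma powerSeriesSum_mul {R : Type*} [NormedCommRing R] [CompleteSpace R] {f g : R⟦X⟧} {x : R}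
    (hf : Summable fun n ↦ ‖coeff n f * x ^ n‖) (hg : Summable fun n ↦ ‖coeff n g * x ^ n‖) :
    powerSeriesSum (f * g) x = powerSeriesSum f x * powerSeriesSum g x := by
  simp only [powerSeriesSum]
  rw [tsum_mul_tsum_eq_tsum_sum_antidiagonal_of_summable_norm hf hg]
  refine tsum_congr fun n ↦ ?_
  rw [coeff_mul, Finset.sum_mul]
  refine Finset.sum_congr rfl fun kl hkl ↦ ?_
  rw [← Finset.HasAntidiagonal.mem_antidiagonal.mp hkl, pow_add]
  ring

lemma coeff_exp_mul_pow {K : Type*} [Field K] [Algebra ℚ K] (x : K) (n : ℕ) :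
    coeff n (PowerSeries.exp K) * x ^ n = x ^ n / n.factorial := by
  rw [coeff_exp]
  simp [div_eq_inv_mul]

lemma powerSeriesSum_exp (x : ℂ) : powerSeriesSum (PowerSeries.exp ℂ) x = Complex.exp x := by
  simp only [powerSeriesSum, coeff_exp_mul_pow, Complex.exp_eq_exp_ℂ,
    NormedSpace.exp_eq_tsum_div]

lemma summable_norm_coeff_rescale_exp (μ x : ℂ) :
    Summable fun n ↦ ‖coeff n (rescale μ (PowerSeries.exp ℂ)) * x ^ n‖ := by
  refine (NormedSpace.norm_expSeries_div_summable (μ * x)).congr fun n ↦ ?_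
  rw [coeff_rescale, mul_right_comm, ← mul_pow, mul_comm ((μ * x) ^ n), coeff_exp_mul_pow]

end Evaluation

section ComplexHypergeometric

open PowerSeries

variable {b : Multiset ℂ}

lemma coeff_formalHypergeometric_eq_prod_Gamma_mul (a : Multiset ℂ) (hb : ∀ j ∈ b, ∀ k : ℕ, j ≠ -k)
    (n : ℕ) :
    coeff n (formalHypergeometric a b) = (b.map Gamma).prod * regularizedHGFunCoeff a b n := by
  have h_prod : (b.map Gamma).prod ≠ 0 := by
    simpa [Multiset.prod_eq_zero_iff] using fun j hj ↦ Gamma_ne_zero (hb j hj)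
  have h_poch : (b.map (ascPochhammer ℂ n).eval).prod =
      (b.map (Gamma <| · + n)).prod / (b.map Gamma).prod := by
    rw [← Multiset.prod_map_div]
    exact congrArg _ (Multiset.map_congr rfl fun j hj ↦
      (Gamma_add_nat_div_Gamma_eq j (hb j hj)).symm)
  rw [formalHypergeometric, coeff_mk, regularizedHGFunCoeff, h_poch]
  field_simp

lemma summable_norm_coeff_formalHypergeometric {a : Multiset ℂ} (h_card : a.card ≤ b.card)
    (hb : ∀ j ∈ b, ∀ k : ℕ, j ≠ -k) (x : ℂ) :
    Summable fun n ↦ ‖coeff n (formalHypergeometric a b) * x ^ n‖ := by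
  have h := (regularizedHGFunSeries a b).summable_norm_apply (x := x)
    (by simp [radius_regularizedHGFunSeries_eq_top h_card])
  refine (h.mul_left ‖(b.map Gamma).prod‖).congr fun n ↦ ?_
  rw [coeff_formalHypergeometric_eq_prod_Gamma_mul a hb, ← norm_mul]
  simp [regularizedHGFunSeries, mul_assoc, mul_comm (‖x‖ ^ n)]

lemma Gamma_mul_zeroF1reg {c : ℂ} (hc : ∀ n : ℕ, c ≠ -n) (x : ℂ) :
    Gamma c * zeroF1reg c x = powerSeriesSum (formalHypergeometric 0 {c}) x := by
  rw [zeroF1reg, ← tsum_mul_left]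
  refine tsum_congr fun n ↦ ?_
  rw [coeff_formalHypergeometric_eq_prod_Gamma_mul 0 (by simpa using hc)]
  simp only [regularizedHGFunCoeff, Multiset.map_zero, Multiset.map_singleton, Multiset.prod_zero,
    Multiset.prod_singleton]
  ring

lemma Gamma_mul_oneF1reg (a : ℂ) {c : ℂ} (hc : ∀ n : ℕ, c ≠ -n) (x : ℂ) :
    Gamma c * oneF1reg a c x = powerSeriesSum (formalHypergeometric {a} {c}) x := by
  rw [oneF1reg, ← tsum_mul_left]
  refine tsum_congr fun n ↦ ?_
  rw [coeff_formalHypergeometric_eq_prod_Gamma_mul {a} (by simpa using hc)]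
  simp only [regularizedHGFunCoeff, Multiset.map_singleton, Multiset.prod_singleton]
  ring

end ComplexHypergeometric

theorem kummer_second_transformation_general (c w : ℂ) (hc : ∀ n : ℕ, 2 * c - 1 ≠ -(n : ℂ)) :
    Gamma c * zeroF1reg c (w ^ 2) =
      exp (-2 * w) * (Gamma (2 * c - 1) * oneF1reg (c - 1 / 2) (2 * c - 1) (4 * w)) := by
  have hc_pole : ∀ n : ℕ, c ≠ -n := fun n hn ↦ hc (2 * n + 1) (by rw [hn]; push_cast; ring)
  obtain ⟨a, rfl⟩ : ∃ a, c = a + 1 / 2 := ⟨c - 1 / 2, by ring⟩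
  rw [show 2 * (a + 1 / 2) - 1 = 2 * a by ring] at hc ⊢
  rw [add_sub_cancel_right, Gamma_mul_zeroF1reg hc_pole, Gamma_mul_oneF1reg a hc]
  symm
  calc exp (-2 * w) * powerSeriesSum (formalHypergeometric {a} {2 * a}) (4 * w)
      = powerSeriesSum (PowerSeries.rescale (-1 / 2) (PowerSeries.exp ℂ)) (4 * w) *
          powerSeriesSum (formalHypergeometric {a} {2 * a}) (4 * w) := by
        rw [powerSeriesSum_rescale, powerSeriesSum_exp]; ring_nf
    _ = powerSeriesSum (PowerSeries.rescale (-1 / 2) (PowerSeries.exp ℂ) *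
          formalHypergeometric {a} {2 * a}) (4 * w) :=
        (powerSeriesSum_mul (summable_norm_coeff_rescale_exp _ _)
          (summable_norm_coeff_formalHypergeometric (by simp) (by simpa using hc) _)).symm
    _ = powerSeriesSum (formalHypergeometric 0 {a + 1 / 2}) (w ^ 2) := by
        rw [rescale_exp_mul_formalHypergeometric hc, powerSeriesSum_expand, powerSeriesSum_rescale]
        ring_nf

/-- Kummer's second transformation:
`₀F₁(c; z) = e^{-2√z} ₁F₁(c - 1/2; 2c - 1; 4√z)` whenever neither `c` nor `2c - 1` is a
nonpositive integer and `z ∉ ]-∞,0]`, with `√z` the principal square root, where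
`₀F₁(c; z) = Γ(c)·₀𝐅₁(c; z)` and `₁F₁(a; c; z) = Γ(c)·₁𝐅₁(a; c; z)`. -/
theorem kummer_second_transformation (c z : ℂ)
    (hc : ∀ n : ℕ, c ≠ -(n : ℂ)) (hc' : ∀ n : ℕ, 2 * c - 1 ≠ -(n : ℂ))
    (hz : ¬(z.im = 0 ∧ z.re ≤ 0)) :
    Complex.Gamma c * zeroF1reg c z =
      Complex.exp (-2 * z ^ ((1 : ℂ) / 2)) *
        (Complex.Gamma (2 * c - 1) *
          oneF1reg (c - 1 / 2) (2 * c - 1) (4 * z ^ ((1 : ℂ) / 2))) := by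
  have h_sqrt : (z ^ ((1 : ℂ) / 2)) ^ 2 = z := by simp
  simpa only [h_sqrt] using kummer_second_transformation_general c (z ^ ((1 : ℂ) / 2)) hc'
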